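/- Let Σ₂ = {0,1}^ℕ with the shift map σ, for k ∈ ℕ₀ let X_k ⊆ Σ₂ be the set of sequences in which any two occurrences of the symbol 1 are separated by at least k+1 symbols 0, and let X_∞ ⊆ Σ₂ be the set of sequences with at most one symbol 1. Let N = {1/2^k : k ∈ ℕ₀} ∪ {0} with the topology inherited from ℝ, and set X = ({0} × X_∞) ∪ ⋃_{k≥0} ({1/2^k} × X_k) ⊆ N × Σ₂. Then X is a closed (hence compact) subset of N × Σ₂. -/

import Mathlib

/-!
For `a = 1/2ᵏ`, the condition `m + k + 2 ≤ n` on positions `m < n` of two symbols `1` is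
equivalent to `2 ^ (m + 2) ≤ a * 2 ^ n`; for `a = 0` that inequality is false, which says exactly
that there are no two symbols `1`. Hence (`mem_bigX_iff`) `X` is cut out of `N × Σ₂` by the
conditions `ξ m = 1 → ξ n = 1 → 2 ^ (m + 2) ≤ a * 2 ^ n`, each of which is closed because its
premises are open and its conclusion is a non-strict inequality between continuous functions.
Since `N` consists of a convergent sequence and its limit, it is compact, so `N × Σ₂` is compact
and so is its closed subset `X`.
-/

/-- The full one-sided shift space `Σ₂ = {0,1}^ℕ` (with `true` playing the role of `1`). -/
abbrev Sigma2 : Type := ℕ → Bool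

/-- The shift map on `Σ₂`. -/
def shiftMap : Sigma2 → Sigma2 := fun ξ n => ξ (n + 1)

/- The standard metric on `Σ₂`: `d(ξ,η) = 2^{-min{n : ξ_n ≠ η_n}}`, `d(ξ,ξ) = 0`. -/
open Classical in
noncomputable def shiftDist (ξ η : Sigma2) : ℝ :=
  if h : ξ = η then 0 else (1 / 2 : ℝ) ^ Nat.find (Function.ne_iff.mp h)

/-- The set of sequences with at most one occurrence of the symbol `1`. -/
def Xinf : Set Sigma2 := {ξ | ∀ m n : ℕ, ξ m = true → ξ n = true → m = n}
/-- The subshift of finite type `X_k`: any two occurrences of `1` are separated by at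
least `k+1` zeros (their positions differ by at least `k+2`). -/
def Xk (k : ℕ) : Set Sigma2 :=
  {ξ | ∀ m n : ℕ, m < n → ξ m = true → ξ n = true → m + k + 2 ≤ n}

/-- The space `X = ({0} × X_∞) ∪ ⋃ₖ ({1/2ᵏ} × X_k)` inside `ℝ × Σ₂`. -/
def bigX : Set (ℝ × Sigma2) :=
  (({(0 : ℝ)} : Set ℝ) ×ˢ Xinf) ∪ ⋃ k : ℕ, (({(1 / 2 ^ k : ℝ)} : Set ℝ) ×ˢ Xk k)

/-- The map `f(a, ξ) = (a, σ(ξ))`. -/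
def prodMap : ℝ × Sigma2 → ℝ × Sigma2 := fun p => (p.1, shiftMap p.2)

/-- The max-metric on `ℝ × Σ₂`. -/
noncomputable def prodDist (p q : ℝ × Sigma2) : ℝ :=
  max |p.1 - q.1| (shiftDist p.2 q.2)

/-- The base `N = {0} ∪ {1/2ᵏ : k ∈ ℕ}`, as a subset of `ℝ`. -/
def baseN : Set ℝ := insert 0 (Set.range fun k : ℕ => (1 / 2 ^ k : ℝ))

theorem baseN_isCompact : IsCompact baseN := by
  apply Filter.Tendsto.isCompact_insert_range
  simpa [one_div] using
    tendsto_pow_atTop_nhds_zero_of_lt_one (r := (2 : ℝ)⁻¹) (by norm_num) (by norm_num)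

/-- The separation condition as one non-strict inequality, continuous in the base point `a`.
At `a = 0` the inequality fails, so two occurrences of `1` are excluded there. -/
theorem mem_bigX_iff (p : ℝ × Sigma2) :
    p ∈ bigX ↔ p.1 ∈ baseN ∧ ∀ m n : ℕ, m < n → p.2 m = true → p.2 n = true →
      (2 : ℝ) ^ (m + 2) ≤ p.1 * 2 ^ n := by
  obtain ⟨a, ξ⟩ := p
  have key (k m n : ℕ) : (2 : ℝ) ^ (m + 2) ≤ 1 / 2 ^ k * 2 ^ n ↔ m + k + 2 ≤ n := by
    rw [one_div, inv_mul_eq_div, le_div_iff₀ (by positivity), ← pow_add,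
      pow_le_pow_iff_right₀ (by norm_num)]
    omega
  constructor
  · rintro (⟨h0, hξ⟩ | h)
    · refine ⟨Or.inl h0, fun m n hmn hm hn => ?_⟩
      exact absurd (hξ m n hm hn) hmn.ne
    · obtain ⟨k, hk, hξ⟩ := Set.mem_iUnion.mp h
      obtain rfl : a = 1 / 2 ^ k := hk
      exact ⟨Or.inr ⟨k, rfl⟩, fun m n hmn hm hn => (key k m n).mpr (hξ m n hmn hm hn)⟩
  · rintro ⟨h0 | ⟨k, hk⟩, h⟩
    · obtain rfl : a = 0 := h0
      have no_pair (m n : ℕ) (hmn : m < n) (hm : ξ m = true) (hn : ξ n = true) : False := by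
        have h1 : (2 : ℝ) ^ (m + 2) ≤ 0 * 2 ^ n := h m n hmn hm hn
        have h2 : (0 : ℝ) < 2 ^ (m + 2) := by positivity
        linarith
      refine Or.inl ⟨rfl, fun m n hm hn => ?_⟩
      rcases lt_trichotomy m n with hmn | hmn | hmn
      · exact (no_pair m n hmn hm hn).elim
      · exact hmn
      · exact (no_pair n m hmn hn hm).elim
    · obtain rfl : 1 / 2 ^ k = a := hk
      exact Or.inr (Set.mem_iUnion.mpr
        ⟨k, rfl, fun m n hmn hm hn => (key k m n).mp (h m n hmn hm hn)⟩)

theorem bigX_isClosed : IsClosed bigX := by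
  have h : bigX = {p : ℝ × Sigma2 | p.1 ∈ baseN ∧ ∀ m n : ℕ, m < n → p.2 m = true →
      p.2 n = true → (2 : ℝ) ^ (m + 2) ≤ p.1 * 2 ^ n} := Set.ext mem_bigX_iff
  rw [h]
  -- Each coordinate condition `ξ m = true` is open, so it may stand as a premise.
  have hopen (m : ℕ) : IsOpen {p : ℝ × Sigma2 | p.2 m = true} :=
    (isOpen_discrete ({true} : Set Bool)).preimage
      (f := fun p : ℝ × Sigma2 => p.2 m) (by fun_prop)
  refine (baseN_isCompact.isClosed.preimage continuous_fst).and ?_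
  simp only [Set.ofPred_forall]
  refine isClosed_iInter fun m => isClosed_iInter fun n => isClosed_iInter fun _ => ?_
  exact isClosed_imp (hopen m) (isClosed_imp (hopen n)
    (isClosed_le continuous_const (continuous_fst.mul continuous_const)))

/-- `X = ({0} × X_∞) ∪ ⋃ₖ ({1/2ᵏ} × X_k)` is a closed, hence compact,
subset of `N × Σ₂ ⊆ ℝ × Σ₂`. -/
theorem bigX_isClosed_isCompact : IsClosed bigX ∧ IsCompact bigX := by
  refine ⟨bigX_isClosed, ?_⟩
  refine (baseN_isCompact.prod (isCompact_univ (X := Sigma2))).of_isClosed_subset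
    bigX_isClosed fun p hp => ?_
  exact ⟨((mem_bigX_iff p).mp hp).1, Set.mem_univ _⟩
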